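/- A solenoid of type (w₁, w₂, …) admits a connected r-fold covering if and only if r is relatively prime to all but finitely many of the wₙ. That is, for a positive integer r, there exist a connected space X and a covering map π : X → Θ all of whose fibers have exactly r elements if and only if there exists N such that gcd(r, wₙ) = 1 for all n > N. -/

import Mathlib

open Topology

/-- The solenoid of type `(w 0, w 1, …)` (denoted `(w₁, w₂, …)` in the paper),
as a subgroup of the product of countably many circles:
`{(x₀, x₁, …) : xₙ₋₁ = xₙ ^ wₙ for all n ≥ 1}`. -/
noncomputable def solenoidSubgroup (w : ℕ → ℕ) : Subgroup (ℕ → Circle) where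
  carrier := {x | ∀ n, x n = x (n + 1) ^ w n}
  one_mem' := by intro n; simp
  mul_mem' := by intro a b ha hb n; simp only [Pi.mul_apply, ha n, hb n, mul_pow]
  inv_mem' := by intro a ha n; simp only [Pi.inv_apply, ha n, inv_pow]

/-- The solenoid as a topological space, with the subspace topology from the
product topology. -/
noncomputable abbrev Solenoid (w : ℕ → ℕ) : Type :=
  ↥(solenoidSubgroup w)

/-!
If `r` is coprime to `w n` for `n ≥ N`, then an `r`-th root of `x : Solenoid w` is determined by an
arbitrary `r`-th root of its `N`-th coordinate, so `x ↦ x ^ r` is an `r`-fold covering of the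
connected group `Solenoid w` by itself.

Conversely, the winding flow on the solenoid lifts to any connected covering space `X`. The points
with trivial `n`-th coordinate form a cross-section of period `w 0 ⋯ w (n - 1)`. For large `n` the
covering is trivial over it and the return map permutes the sheets by a fixed permutation `σ n`, by
compactness. Connectedness of `X` makes every `σ n` transitive on the `r` sheets, and comparing the
periods gives `σ (n + 1) = σ n ^ w n`; a power of an `r`-cycle is transitive only for exponents
coprime to `r`.
-/

open Bundle (Trivialization)
open Filter Function Set

section Permutation

variable {α : Type*} {σ : Equiv.Perm α}

theorem coprime_card_of_isCycleOn_pow {s : Finset α} {k : ℕ} (hs : s.Nonempty)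
    (hσ : BijOn σ s s) (hσk : (σ ^ k).IsCycleOn s) : s.card.Coprime k := by
  obtain ⟨a, ha⟩ := hs
  have hcard : 0 < s.card := Finset.card_pos.mpr ⟨a, ha⟩
  set d := s.card.gcd k
  have hfix : ((σ ^ k) ^ (s.card / d)) a = a := by
    have hexp : k * (s.card / d) = s.card * (k / d) := by
      rw [← Nat.mul_div_assoc _ (Nat.gcd_dvd_left ..), ← Nat.mul_div_assoc _ (Nat.gcd_dvd_right ..),
        mul_comm]
    rw [← pow_mul, hexp, (hσk.of_pow hσ).pow_apply_eq ha]
    exact dvd_mul_right ..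
  have hdvd : s.card ∣ s.card / d := (hσk.pow_apply_eq ha).mp hfix
  have hpos : 0 < s.card / d :=
    Nat.div_pos (Nat.gcd_le_left _ hcard) (Nat.gcd_pos_of_pos_left _ hcard)
  exact (Nat.div_eq_self.mp ((Nat.div_le_self ..).antisymm (Nat.le_of_dvd hpos hdvd))).resolve_left
    hcard.ne'

end Permutation

section Power

variable {G : Type*} [CommGroup G]

theorem exists_pow_eq_and_pow_eq_of_coprime {a b : G} {m n : ℕ} (hmn : m.Coprime n)
    (hab : a ^ m = b ^ n) : ∃ c, c ^ n = a ∧ c ^ m = b := by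
  have hbezout : (m * m.gcdA n + n * m.gcdB n : ℤ) = 1 := by
    rw [← Nat.gcd_eq_gcd_ab, hmn.gcd_eq_one, Nat.cast_one]
  replace hab : a ^ (m : ℤ) = b ^ (n : ℤ) := by exact_mod_cast hab
  have ha : (a ^ m.gcdB n * b ^ m.gcdA n) ^ (n : ℤ) = a := by
    rw [mul_zpow, zpow_comm b, ← hab, ← zpow_mul, ← zpow_mul, ← zpow_add, mul_comm _ (n : ℤ),
      add_comm, hbezout, zpow_one]
  have hb : (a ^ m.gcdB n * b ^ m.gcdA n) ^ (m : ℤ) = b := by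
    rw [mul_zpow, zpow_comm a, hab, ← zpow_mul, ← zpow_mul, ← zpow_add, mul_comm _ (m : ℤ),
      add_comm, hbezout, zpow_one]
  exact ⟨a ^ m.gcdB n * b ^ m.gcdA n, by exact_mod_cast ha, by exact_mod_cast hb⟩

end Power

section Topology

variable {X Y F : Type*} [TopologicalSpace X] [TopologicalSpace Y] [TopologicalSpace F] {π : X → Y}

theorem t2Space_of_isSeparatedMap [T2Space Y] (hπ : Continuous π) (hsep : IsSeparatedMap π) :
    T2Space X := by
  refine ⟨fun x y hxy => ?_⟩
  by_cases h : π x = π y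
  · exact hsep x y h hxy
  · exact separated_by_continuous hπ h

theorem isCompact_preimage_of_subset_baseSet [CompactSpace F] (t : Trivialization F π) {K : Set Y}
    (hK : IsCompact K) (hKt : K ⊆ t.baseSet) : IsCompact (π ⁻¹' K) := by
  have := isCompact_iff_compactSpace.mp hK
  exact isCompact_iff_compactSpace.mpr (t.preimageHomeomorph hKt).symm.compactSpace

theorem eq_of_proj_eq_of_trivialization_snd_eq (t : Trivialization F π) {x y : X}
    (hx : π x ∈ t.baseSet) (hπ : π x = π y) (h : (t x).2 = (t y).2) : x = y := by
  have hy : π y ∈ t.baseSet := hπ ▸ hx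
  have hxy : t x = t y := by rw [← t.mk_proj_snd' hx, ← t.mk_proj_snd' hy, hπ, h]
  exact t.toOpenPartialHomeomorph.injOn (t.mem_source.mpr hx) (t.mem_source.mpr hy) hxy

theorem exists_proj_eq_trivialization_snd_eq (t : Trivialization F π) {y : Y} (hy : y ∈ t.baseSet)
    (i : F) : ∃ x, π x = y ∧ (t x).2 = i :=
  ⟨t.toOpenPartialHomeomorph.symm (y, i), t.proj_symm_apply' hy, by rw [t.apply_symm_apply' hy]⟩

theorem exists_factorsThrough_of_compactSpace {Z : ℕ → Type*} [CompactSpace X]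
    [∀ n, TopologicalSpace (Z n)] [∀ n, T2Space (Z n)] [DiscreteTopology F]
    {f : ∀ n, X → Z n} {g : X → F} (hf : ∀ n, Continuous (f n))
    (hfac : ∀ m n, m ≤ n → (f m).FactorsThrough (f n))
    (hinj : ∀ x y, (∀ n, f n x = f n y) → x = y) (hg : Continuous g) :
    ∃ n, g.FactorsThrough (f n) := by
  let V (n : ℕ) : Set (X × X) := {p | f n p.1 = f n p.2}
  have hV (n : ℕ) : IsClosed (V n) :=
    isClosed_eq ((hf n).comp continuous_fst) ((hf n).comp continuous_snd)
  have hanti : Antitone V := fun m n hmn _ hp => hfac m n hmn hp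
  have hopen : IsOpen {p : X × X | g p.1 = g p.2} :=
    (isOpen_discrete {q : F × F | q.1 = q.2}).preimage (hg.prodMap hg)
  obtain ⟨n, hn⟩ := exists_subset_nhds_of_compactSpace hanti.directed_ge hV fun p hp =>
    hopen.mem_nhds <| congrArg g <| hinj p.1 p.2 (mem_iInter.mp hp)
  exact ⟨n, fun x y hxy => hn (a := (x, y)) hxy⟩

end Topology

section FlowLift

variable {X Y : Type*} [TopologicalSpace X] [TopologicalSpace Y] {π : X → Y}

open unitInterval in
theorem continuous_uncurry_of_forall_unitInterval {Φ : ℝ → X → X}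
    (hadd : ∀ s t x, Φ (s + t) x = Φ s (Φ t x))
    (hΦ : ∀ R : ℝ, Continuous fun p : I × X => Φ (R * p.1) p.2) : Continuous (uncurry Φ) := by
  have hpoint (t : ℝ) : Continuous (Φ t) := by
    simpa [comp_def] using (hΦ t).comp (Continuous.prodMk_right (1 : I))
  refine continuous_iff_continuousAt.mpr fun ⟨t₀, x₀⟩ => ?_
  set R : ℝ := |t₀| + 1
  have hR : 0 < R := by positivity
  let s (t : ℝ) : I := projIcc 0 1 zero_le_one ((t + R) / (2 * R))
  -- Shifting the time by `R` makes it nonnegative near `t₀`.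
  have hcont : Continuous fun p : ℝ × X => Φ (2 * R * s p.1) (Φ (-R) p.2) := by
    have hs : Continuous s := continuous_projIcc.comp (by fun_prop)
    exact (hΦ (2 * R)).comp ((hs.comp continuous_fst).prodMk ((hpoint _).comp continuous_snd))
  refine hcont.continuousAt.congr ?_
  have hnear : ∀ᶠ t in 𝓝 t₀, |t| < R :=
    continuous_abs.continuousAt.eventually_lt_const (by simp [R])
  filter_upwards [hnear.prod_inl_nhds x₀] with ⟨t, x⟩ ht
  obtain ⟨hlt, hgt⟩ := abs_lt.mp ht
  have hmem : (t + R) / (2 * R) ∈ I :=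
    ⟨div_nonneg (by linarith) (by linarith), (div_le_one (by linarith)).mpr (by linarith)⟩
  have hs : 2 * R * s t = t + R := by
    simp only [s, projIcc_of_mem zero_le_one hmem]
    field_simp
  simp [uncurry, hs, ← hadd]

theorem exists_flow_lift (cov : IsCoveringMap π) (φ : Flow ℝ Y) :
    ∃ Φ : Flow ℝ X, ∀ t, Semiconj π (Φ t) (φ t) := by
  have hlift (x : X) : ∃ γ : C(ℝ, X), γ 0 = x ∧ ∀ t, π (γ t) = φ t (π x) := by
    obtain ⟨γ, ⟨hγ₀, hγ⟩, -⟩ := cov.existsUnique_continuousMap_lifts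
      (⟨fun t => φ t (π x), by fun_prop⟩ : C(ℝ, Y)) 0 x (by simp)
    exact ⟨γ, hγ₀, congrFun hγ⟩
  choose γ hγ₀ hγ using hlift
  have hadd (s t : ℝ) (x : X) : γ x (s + t) = γ (γ x t) s := by
    refine congrFun (cov.eq_of_comp_eq (g₁ := fun s => γ x (s + t)) (by fun_prop)
      (γ (γ x t)).continuous ?_ 0 (by simp [hγ₀])) s
    funext s
    simp [hγ, φ.map_add]
  refine ⟨⟨fun t x => γ x t, continuous_uncurry_of_forall_unitInterval hadd fun R => ?_, hadd, hγ₀⟩,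
    fun t x => hγ x t⟩
  let H : C(unitInterval × X, Y) :=
    ⟨fun p => φ (R * p.1) (π p.2), by have := cov.continuous; fun_prop⟩
  have hH₀ (x : X) : H (0, x) = π (ContinuousMap.id X x) := by simp [H]
  have hunique := (cov.eq_liftHomotopy_iff (f := ContinuousMap.id X) hH₀
    (fun p => γ p.2 (R * p.1))).mpr ⟨fun x => (γ x).continuous.comp (by fun_prop),
      funext fun p => by simp [H, hγ], fun x => by simp [hγ₀]⟩
  exact hunique ▸ ContinuousMap.continuous _

end FlowLift

/-- `P` is a global cross-section of the flow `Φ` with constant return time `T`: every orbit meets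
`P`, and an orbit starting in `P` is in `P` exactly at the integer multiples of `T`. -/
structure IsCrossSection {X : Type*} [TopologicalSpace X] (Φ : Flow ℝ X) (P : Set X) (T : ℝ) :
    Prop where
  pos : 0 < T
  exists_flow_eq : ∀ x, ∃ t, ∃ p ∈ P, Φ t p = x
  flow_mem_iff : ∀ p ∈ P, ∀ t, Φ t p ∈ P ↔ ∃ k : ℤ, t = k * T

namespace IsCrossSection

variable {X Y F : Type*} [TopologicalSpace X] [TopologicalSpace Y]
  {Φ : Flow ℝ X} {P : Set X} {T : ℝ}

theorem preimage {φ : Flow ℝ Y} {K : Set Y} {π : X → Y} (hK : IsCrossSection φ K T)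
    (hπ : ∀ t, Semiconj π (Φ t) (φ t)) : IsCrossSection Φ (π ⁻¹' K) T where
  pos := hK.pos
  exists_flow_eq x := by
    obtain ⟨t, p, hp, hpx⟩ := hK.exists_flow_eq (π x)
    refine ⟨t, Φ (-t) x, ?_, by simp [← Φ.map_add]⟩
    rwa [mem_preimage, hπ, ← hpx, ← φ.map_add, neg_add_cancel, φ.map_zero_apply]
  flow_mem_iff p hp t := by rw [mem_preimage, hπ, hK.flow_mem_iff _ hp]

theorem flow_intCast_mul_mem (hP : IsCrossSection Φ P T) {p : X} (hp : p ∈ P) (k : ℤ) :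
    Φ (k * T) p ∈ P :=
  (hP.flow_mem_iff p hp _).mpr ⟨k, rfl⟩

theorem flow_mem (hP : IsCrossSection Φ P T) {p : X} (hp : p ∈ P) : Φ T p ∈ P := by
  simpa using hP.flow_intCast_mul_mem hp 1

theorem exists_mem_Icc_flow_eq (hP : IsCrossSection Φ P T) (x : X) :
    ∃ s ∈ Icc 0 T, ∃ p ∈ P, Φ s p = x := by
  obtain ⟨t, p, hp, rfl⟩ := hP.exists_flow_eq x
  refine ⟨toIcoMod hP.pos 0 t, ?_, _, hP.flow_intCast_mul_mem hp (toIcoDiv hP.pos 0 t), ?_⟩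
  · simpa using Ico_subset_Icc_self (toIcoMod_mem_Ico hP.pos 0 t)
  · rw [← Φ.map_add, ← zsmul_eq_mul, toIcoMod_add_toIcoDiv_zsmul]

variable {c : X → F} {σ : Equiv.Perm F}

theorem label_flow_intCast_mul (hP : IsCrossSection Φ P T) (hc : ∀ p ∈ P, c (Φ T p) = σ (c p))
    {p : X} (hp : p ∈ P) (k : ℤ) : c (Φ (k * T) p) = (σ ^ k) (c p) := by
  have hsucc (k : ℤ) : c (Φ ((k + 1 : ℤ) * T) p) = σ (c (Φ (k * T) p)) := by
    rw [← hc _ (hP.flow_intCast_mul_mem hp k), ← Φ.map_add]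
    congr 2
    push_cast
    ring
  induction k with
  | zero => simp
  | succ k ih => rw [hsucc, ih, add_comm, zpow_one_add, Equiv.Perm.mul_apply]
  | pred k ih =>
    apply σ.injective
    rw [← hsucc, sub_add_cancel, ih, ← Equiv.Perm.mul_apply, ← zpow_one_add, add_sub_cancel]

theorem sameCycle_of_flow_eq (hP : IsCrossSection Φ P T) (hc : ∀ p ∈ P, c (Φ T p) = σ (c p))
    {p q : X} {s t : ℝ} (hp : p ∈ P) (hq : q ∈ P) (h : Φ s p = Φ t q) :
    σ.SameCycle (c p) (c q) := by
  have hpq : Φ (s - t) p = q := by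
    rw [sub_eq_neg_add, Φ.map_add, h, ← Φ.map_add, neg_add_cancel, Φ.map_zero_apply]
  obtain ⟨k, hk⟩ := (hP.flow_mem_iff p hp (s - t)).mp (hpq ▸ hq)
  exact ⟨k, by rw [← hP.label_flow_intCast_mul hc hp, ← hk, hpq]⟩

theorem isQuotientMap_flow [T2Space X] (hP : IsCrossSection Φ P T) (hPc : IsCompact P) :
    IsQuotientMap fun a : Icc 0 T × P => Φ a.1 a.2 := by
  have : CompactSpace P := isCompact_iff_compactSpace.mp hPc
  have hcont : Continuous fun a : Icc 0 T × P => Φ a.1 a.2 := by fun_prop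
  refine hcont.isClosedMap.isQuotientMap hcont fun x => ?_
  obtain ⟨s, hs, p, hp, rfl⟩ := hP.exists_mem_Icc_flow_eq x
  exact ⟨(⟨s, hs⟩, ⟨p, hp⟩), rfl⟩

theorem sameCycle_label [T2Space X] [PreconnectedSpace X] [TopologicalSpace F] [DiscreteTopology F]
    (hP : IsCrossSection Φ P T) (hPc : IsCompact P) (hcont : ContinuousOn c P)
    (hc : ∀ p ∈ P, c (Φ T p) = σ (c p)) {p q : X} (hp : p ∈ P) (hq : q ∈ P) :
    σ.SameCycle (c p) (c q) := by
  let B : Set X := {x | ∃ s, ∃ y ∈ P, Φ s y = x ∧ σ.SameCycle (c p) (c y)}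
  have hpre : (fun a : Icc 0 T × P => Φ a.1 a.2) ⁻¹' B =
      (fun a => c a.2) ⁻¹' {i | σ.SameCycle (c p) i} := by
    ext ⟨s, y⟩
    constructor
    · rintro ⟨s', y', hy', h, hcycle⟩
      exact hcycle.trans (hP.sameCycle_of_flow_eq hc hy' y.2 h)
    · exact fun hcycle => ⟨s, y, y.2, rfl, hcycle⟩
  have hclopen : IsClopen B := by
    rw [← (hP.isQuotientMap_flow hPc).isClopen_preimage, hpre]
    exact (isClopen_discrete _).preimage (hcont.domRestrict.comp continuous_snd)
  have hB : B = univ := hclopen.eq_univ ⟨p, 0, p, hp, Φ.map_zero_apply p, .rfl⟩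
  obtain ⟨s, y, hy, hyq, hcycle⟩ : q ∈ B := hB ▸ mem_univ q
  exact hcycle.trans (hP.sameCycle_of_flow_eq hc hy hq (hyq.trans (Φ.map_zero_apply q).symm))

theorem isCycleOn_univ [T2Space X] [PreconnectedSpace X] [TopologicalSpace F] [DiscreteTopology F]
    (hP : IsCrossSection Φ P T) (hPc : IsCompact P) (hcont : ContinuousOn c P)
    (hc : ∀ p ∈ P, c (Φ T p) = σ (c p)) (hsurj : SurjOn c P univ) : σ.IsCycleOn univ := by
  refine ⟨σ.bijective.bijOn_univ, fun i _ j _ => ?_⟩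
  obtain ⟨p, hp, rfl⟩ := hsurj (mem_univ i)
  obtain ⟨q, hq, rfl⟩ := hsurj (mem_univ j)
  exact hP.sameCycle_label hPc hcont hc hp hq

theorem eq_pow_of_label_flow_mul {τ : Equiv.Perm F} {Q : Set X} {k : ℕ}
    (hP : IsCrossSection Φ P T) (hQP : Q ⊆ P) (hc : ∀ p ∈ P, c (Φ T p) = σ (c p))
    (hcQ : ∀ q ∈ Q, c (Φ (k * T) q) = τ (c q)) (hsurj : SurjOn c Q univ) : τ = σ ^ k := by
  ext i
  obtain ⟨q, hq, rfl⟩ := hsurj (mem_univ i)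
  rw [← hcQ q hq, ← zpow_natCast, ← hP.label_flow_intCast_mul hc (hQP hq), Int.cast_natCast]

end IsCrossSection

namespace Solenoid

variable {w : ℕ → ℕ}

section Coordinates

variable (w) in
/-- The projection of the solenoid onto its `n`-th circle. -/
noncomputable def coord (n : ℕ) : Solenoid w →* Circle :=
  (Pi.evalMonoidHom _ n).comp (solenoidSubgroup w).subtype

@[fun_prop]
theorem continuous_coord (n : ℕ) : Continuous (coord w n) :=
  (continuous_apply n).comp continuous_subtype_val

theorem coord_eq_pow (x : Solenoid w) (n : ℕ) : coord w n x = coord w (n + 1) x ^ w n := x.2 n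

theorem ext_coord {x y : Solenoid w} (h : ∀ n, coord w n x = coord w n y) : x = y :=
  Subtype.ext (funext h)

theorem coord_eq_of_le {x y : Solenoid w} {m n : ℕ} (hmn : m ≤ n)
    (h : coord w n x = coord w n y) : coord w m x = coord w m y := by
  induction n, hmn using Nat.le_induction with
  | base => exact h
  | succ n _ ih => exact ih (by rw [coord_eq_pow, h, ← coord_eq_pow])

theorem antitone_ker_coord : Antitone fun n => (coord w n).ker := fun _ _ hmn _ hx =>
  (coord_eq_of_le hmn (hx.trans (map_one _).symm)).trans (map_one _)

instance : CompactSpace (Solenoid w) := by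
  have hclosed : IsClosed {x : ℕ → Circle | ∀ n, x n = x (n + 1) ^ w n} := by
    simp only [ofPred_forall]
    exact isClosed_iInter fun n => isClosed_eq (by fun_prop) (by fun_prop)
  exact isCompact_iff_compactSpace.mp hclosed.isCompact

theorem isCompact_ker_coord (n : ℕ) : IsCompact ((coord w n).ker : Set (Solenoid w)) :=
  (isClosed_eq (continuous_coord n) continuous_const).isCompact

theorem exists_coord_fiber_subset {x : Solenoid w} {U : Set (Solenoid w)} (hU : U ∈ 𝓝 x) :
    ∃ n, coord w n ⁻¹' {coord w n x} ⊆ U := by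
  let V (n : ℕ) : Set (Solenoid w) := coord w n ⁻¹' {coord w n x}
  have hV (n : ℕ) : IsClosed (V n) := isClosed_singleton.preimage (continuous_coord n)
  have hanti : Antitone V := fun m n hmn _ hy => coord_eq_of_le hmn hy
  refine exists_subset_nhds_of_compactSpace hanti.directed_ge hV fun y hy => ?_
  rwa [ext_coord fun n => mem_iInter.mp hy n]

end Coordinates

section WindingFlow

variable (w) in
/-- The degree `w 0 ⋯ w (n - 1)` with which the `n`-th circle of the solenoid covers the `0`-th. -/
def degree (n : ℕ) : ℕ := ∏ i ∈ Finset.range n, w i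

theorem degree_succ (n : ℕ) : degree w (n + 1) = degree w n * w n := Finset.prod_range_succ ..

theorem degree_dvd_degree {m n : ℕ} (hmn : m ≤ n) : degree w m ∣ degree w n :=
  Finset.prod_dvd_prod_of_subset _ _ _ (Finset.range_mono hmn)

variable [∀ n, NeZero (w n)]

theorem degree_pos (n : ℕ) : 0 < degree w n := Finset.prod_pos fun i _ => Nat.pos_of_neZero (w i)

variable (w) in
/-- The translation flow along the one-parameter subgroup of the solenoid, with the time normalized
so that it winds once around the `0`-th circle, hence `1 / degree w n` times around the `n`-th one,
in unit time. -/
noncomputable def windingFlow : Flow ℝ (Solenoid w) where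
  toFun t x := ⟨fun n => Circle.exp (2 * Real.pi * (t / degree w n)) * coord w n x, fun n => by
    have hw : (w n : ℝ) ≠ 0 := NeZero.ne _
    rw [mul_pow, ← coord_eq_pow, ← Circle.exp_natCast_mul, degree_succ, Nat.cast_mul]
    field_simp⟩
  cont' := by
    simp only [uncurry_def]
    fun_prop
  map_add' s t x := ext_coord fun n => by
    simp [coord, add_div, mul_add, Circle.exp_add, mul_assoc]
  map_zero' x := ext_coord fun n => by simp [coord]

theorem coord_windingFlow (t : ℝ) (x : Solenoid w) (n : ℕ) :
    coord w n (windingFlow w t x) = Circle.exp (2 * Real.pi * (t / degree w n)) * coord w n x :=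
  rfl

theorem exists_coord_windingFlow_eq (n : ℕ) (x y : Solenoid w) :
    ∃ t, coord w n (windingFlow w t x) = coord w n y := by
  obtain ⟨θ, hθ⟩ := Circle.exp_surjective (coord w n y / coord w n x)
  have hdeg : (degree w n : ℝ) ≠ 0 := by exact_mod_cast (degree_pos n).ne'
  refine ⟨degree w n * (θ / (2 * Real.pi)), ?_⟩
  rw [coord_windingFlow, mul_div_cancel_left₀ _ hdeg, mul_div_cancel₀ _ Real.two_pi_pos.ne', hθ,
    div_mul_cancel]

theorem denseRange_windingFlow (x : Solenoid w) : DenseRange fun t => windingFlow w t x := by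
  refine fun y => mem_closure_iff_nhds.mpr fun U hU => ?_
  obtain ⟨n, hn⟩ := exists_coord_fiber_subset hU
  obtain ⟨t, ht⟩ := exists_coord_windingFlow_eq n x y
  exact ⟨_, hn ht, mem_range_self t⟩

instance : ConnectedSpace (Solenoid w) where
  toPreconnectedSpace := (denseRange_windingFlow 1).preconnectedSpace (by fun_prop)
  toNonempty := ⟨1⟩

theorem isCrossSection_ker_coord (n : ℕ) :
    IsCrossSection (windingFlow w) (coord w n).ker (degree w n) where
  pos := by exact_mod_cast degree_pos n
  exists_flow_eq x := by
    obtain ⟨t, ht⟩ := exists_coord_windingFlow_eq n x 1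
    exact ⟨-t, windingFlow w t x, ht.trans (map_one _), by simp [← Flow.map_add]⟩
  flow_mem_iff x hx t := by
    have hdeg : (degree w n : ℝ) ≠ 0 := by exact_mod_cast (degree_pos n).ne'
    simp only [SetLike.mem_coe, MonoidHom.mem_ker] at hx ⊢
    rw [coord_windingFlow, hx, mul_one, Circle.exp_eq_one]
    refine exists_congr fun k => ?_
    rw [mul_comm, mul_left_inj' Real.two_pi_pos.ne', div_eq_iff hdeg]

end WindingFlow

section Covering

variable {X F : Type*} [TopologicalSpace X] [TopologicalSpace F] [Finite F] [DiscreteTopology F]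
  [∀ n, NeZero (w n)] {π : X → Solenoid w} {Φ : Flow ℝ X} {N : ℕ}

theorem exists_forall_label_return_eq (hπ : Continuous π)
    (hΦ : ∀ t, Semiconj π (Φ t) (windingFlow w t)) (t : Trivialization F π)
    (ht : ((coord w N).ker : Set (Solenoid w)) ⊆ t.baseSet) :
    ∃ m, ∀ x ∈ π ⁻¹' (coord w N).ker, ∀ y ∈ π ⁻¹' (coord w N).ker,
      coord w m (π x) = coord w m (π y) → (t x).2 = (t y).2 →
        (t (Φ (degree w N) x)).2 = (t (Φ (degree w N) y)).2 := by
  let P : Set X := π ⁻¹' (coord w N).ker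
  have hP : IsCrossSection Φ P (degree w N) := (isCrossSection_ker_coord N).preimage hΦ
  have : CompactSpace P := isCompact_iff_compactSpace.mp
    (isCompact_preimage_of_subset_baseSet t (isCompact_ker_coord N) ht)
  have hlabel : ContinuousOn (fun x => (t x).2) P :=
    (t.continuousOn_toFun.mono fun x hx => t.mem_source.mpr (ht hx)).snd
  -- A point of `P` is determined by its label and all its coordinates, hence so is the label of its
  -- first return; by compactness finitely many coordinates suffice.
  obtain ⟨m, hm⟩ := exists_factorsThrough_of_compactSpace
    (f := fun n (x : P) => (coord w n (π x), (t x).2))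
    (g := fun x : P => (t (Φ (degree w N) x)).2)
    (fun n =>
      ((continuous_coord n).comp (hπ.comp continuous_subtype_val)).prodMk hlabel.domRestrict)
    (fun m n hmn x y hxy => by
      obtain ⟨hcoord, hsnd⟩ := Prod.mk.inj hxy
      exact Prod.ext (coord_eq_of_le hmn hcoord) hsnd)
    (fun x y hxy => Subtype.ext <| eq_of_proj_eq_of_trivialization_snd_eq t (ht x.2)
      (ext_coord fun n => (Prod.mk.inj (hxy n)).1) (Prod.mk.inj (hxy 0)).2)
    (hlabel.comp_continuous (by fun_prop) fun x => hP.flow_mem x.2)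
  exact ⟨m, fun x hx y hy hcoord hxy => hm (a := ⟨x, hx⟩) (b := ⟨y, hy⟩) (Prod.ext hcoord hxy)⟩

theorem eventually_label_return_eq (hπ : Continuous π)
    (hΦ : ∀ t, Semiconj π (Φ t) (windingFlow w t)) (t : Trivialization F π)
    (ht : ((coord w N).ker : Set (Solenoid w)) ⊆ t.baseSet) :
    ∀ᶠ n in atTop, ∀ x ∈ π ⁻¹' (coord w n).ker, ∀ y ∈ π ⁻¹' (coord w n).ker,
      (t x).2 = (t y).2 → (t (Φ (degree w n) x)).2 = (t (Φ (degree w n) y)).2 := by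
  obtain ⟨m, hm⟩ := exists_forall_label_return_eq hπ hΦ t ht
  have hP : IsCrossSection Φ (π ⁻¹' (coord w N).ker) (degree w N) :=
    (isCrossSection_ker_coord N).preimage hΦ
  filter_upwards [eventually_ge_atTop m, eventually_ge_atTop N] with n hmn hNn x hx y hy hxy
  obtain ⟨j, hj⟩ := degree_dvd_degree (w := w) hNn
  -- The flow rotates the `m`-th coordinates of `x` and `y` alike, so they agree at each return.
  have hiter (k : ℕ) :
      (t (Φ ((k : ℤ) * degree w N) x)).2 = (t (Φ ((k : ℤ) * degree w N) y)).2 := by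
    induction k with
    | zero => simpa using hxy
    | succ k ih =>
      have hcoord : coord w m (π (Φ ((k : ℤ) * degree w N) x)) =
          coord w m (π (Φ ((k : ℤ) * degree w N) y)) := by
        rw [hΦ, hΦ, coord_windingFlow, coord_windingFlow, coord_eq_of_le hmn (hx.trans hy.symm)]
      have hstep := hm _ (hP.flow_intCast_mul_mem (antitone_ker_coord hNn hx) k) _
        (hP.flow_intCast_mul_mem (antitone_ker_coord hNn hy) k) hcoord ih
      rw [← Φ.map_add, ← Φ.map_add] at hstep
      simpa [add_one_mul, add_comm] using hstep
  simpa [hj, mul_comm] using hiter j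

theorem eventually_exists_perm_label_return (hπ : Continuous π)
    (hΦ : ∀ t, Semiconj π (Φ t) (windingFlow w t)) (t : Trivialization F π)
    (ht : ((coord w N).ker : Set (Solenoid w)) ⊆ t.baseSet) :
    ∀ᶠ n in atTop, ∃ σ : Equiv.Perm F, ∀ x ∈ π ⁻¹' (coord w n).ker,
      (t (Φ (degree w n) x)).2 = σ (t x).2 := by
  filter_upwards [eventually_label_return_eq hπ hΦ t ht, eventually_ge_atTop N] with n hn hNn
  have hP : IsCrossSection Φ (π ⁻¹' (coord w n).ker) (degree w n) :=
    (isCrossSection_ker_coord n).preimage hΦ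
  have h1 : (1 : Solenoid w) ∈ t.baseSet := ht (one_mem _)
  choose b hb hbi using exists_proj_eq_trivialization_snd_eq t h1
  have hbP (i : F) : b i ∈ π ⁻¹' (coord w n).ker := by simp [hb]
  have hinj : Injective fun i => (t (Φ (degree w n) (b i))).2 := fun i j hij => by
    have hproj : π (Φ (degree w n) (b i)) = π (Φ (degree w n) (b j)) := by
      rw [hΦ, hΦ, hb, hb]
    have hflow := eq_of_proj_eq_of_trivialization_snd_eq t
      (ht (antitone_ker_coord hNn (hP.flow_mem (hbP i)))) hproj hij
    rw [← hbi i, ← hbi j, (Φ.toHomeomorph _).injective hflow]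
  refine ⟨.ofBijective _ (Finite.injective_iff_bijective.mp hinj), fun x hx => ?_⟩
  exact hn x hx _ (hbP _) (hbi _).symm

theorem eventually_coprime_card [PreconnectedSpace X] [Nonempty F] (cov : IsCoveringMap π)
    (hΦ : ∀ t, Semiconj π (Φ t) (windingFlow w t)) (t : Trivialization F π)
    (ht : ((coord w N).ker : Set (Solenoid w)) ⊆ t.baseSet) :
    ∀ᶠ n in atTop, (Nat.card F).Coprime (w n) := by
  have : Fintype F := .ofFinite F
  have : T2Space X := t2Space_of_isSeparatedMap cov.continuous cov.isSeparatedMap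
  have hperm := eventually_exists_perm_label_return cov.continuous hΦ t ht
  filter_upwards [hperm, (tendsto_add_atTop_nat 1).eventually hperm, eventually_ge_atTop N]
    with n ⟨σ, hσ⟩ ⟨τ, hτ⟩ hNn
  let P (k : ℕ) : Set X := π ⁻¹' (coord w k).ker
  have hP (k : ℕ) : IsCrossSection Φ (P k) (degree w k) := (isCrossSection_ker_coord k).preimage hΦ
  have hPP : P (n + 1) ⊆ P n := fun _ hx => antitone_ker_coord n.le_succ hx
  have hbase : ((coord w (n + 1)).ker : Set (Solenoid w)) ⊆ t.baseSet := fun _ hx =>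
    ht (antitone_ker_coord (hNn.trans n.le_succ) hx)
  have hcont : ContinuousOn (fun x => (t x).2) (P (n + 1)) :=
    (t.continuousOn_toFun.mono fun x hx => t.mem_source.mpr (hbase hx)).snd
  have hsurj : SurjOn (fun x => (t x).2) (P (n + 1)) univ := fun i _ => by
    obtain ⟨x, hx, hxi⟩ := exists_proj_eq_trivialization_snd_eq t (hbase (one_mem _)) i
    exact ⟨x, by simp [P, hx], hxi⟩
  have hτσ : τ = σ ^ w n := (hP n).eq_pow_of_label_flow_mul hPP hσ
    (by simpa [P, degree_succ, mul_comm] using hτ) hsurj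
  have hτcycle : τ.IsCycleOn univ := (hP (n + 1)).isCycleOn_univ
    (isCompact_preimage_of_subset_baseSet t (isCompact_ker_coord _) hbase) hcont hτ hsurj
  rw [Nat.card_eq_fintype_card, ← Finset.card_univ]
  exact coprime_card_of_isCycleOn_pow (σ := σ) Finset.univ_nonempty (by simp)
    (by simpa [← hτσ] using hτcycle)

end Covering

theorem eventually_coprime_card_fiber {X : Type*} [TopologicalSpace X] [PreconnectedSpace X]
    [∀ n, NeZero (w n)] {π : X → Solenoid w} (cov : IsCoveringMap π)
    [Nonempty (π ⁻¹' {1})] [Finite (π ⁻¹' {1})] :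
    ∀ᶠ n in atTop, (Nat.card (π ⁻¹' {1})).Coprime (w n) := by
  obtain ⟨Φ, hΦ⟩ := exists_flow_lift cov (windingFlow w)
  have := (cov 1).discreteTopology_fiber
  let t := (cov 1).toTrivialization
  obtain ⟨N, hN⟩ := exists_coord_fiber_subset
    (t.open_baseSet.mem_nhds (cov 1).mem_toTrivialization_baseSet)
  exact eventually_coprime_card cov hΦ t fun x hx => hN (by simpa using hx)

section Power

variable {r : ℕ} {N : ℕ}

theorem eq_one_of_pow_eq_one (hN : ∀ n ≥ N, r.Coprime (w n)) {q : Solenoid w} (hqr : q ^ r = 1)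
    (hq : coord w N q = 1) : q = 1 := by
  have hle (n : ℕ) (hn : N ≤ n) : coord w n q = 1 := by
    induction n, hn using Nat.le_induction with
    | base => exact hq
    | succ n hn ih =>
      have hqw : coord w (n + 1) q ^ w n = 1 := by rw [← coord_eq_pow, ih]
      have hgcd := pow_gcd_eq_one.mpr ⟨by rw [← map_pow, hqr, map_one], hqw⟩
      rwa [(hN n hn).gcd_eq_one, pow_one] at hgcd
  refine ext_coord fun n => ?_
  rcases le_total N n with hn | hn
  · rw [hle n hn, map_one]
  · exact coord_eq_of_le hn (hq.trans (map_one _).symm)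

/-- The shift `(x₀, x₁, …) ↦ (x₁, x₂, …)`, an isomorphism because `x₀ = x₁ ^ w 0`. -/
noncomputable def tailEquiv (w : ℕ → ℕ) : Solenoid w ≃* Solenoid fun n => w (n + 1) where
  toFun x := ⟨fun n => coord w (n + 1) x, fun n => coord_eq_pow x (n + 1)⟩
  invFun y := ⟨fun n => n.casesOn (coord _ 0 y ^ w 0) fun n => coord _ n y, fun n => by
    cases n with
    | zero => rfl
    | succ n => exact coord_eq_pow y n⟩
  left_inv x := ext_coord fun n => by
    cases n with
    | zero => exact (coord_eq_pow x 0).symm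
    | succ n => rfl
  right_inv _ := rfl
  map_mul' _ _ := rfl

theorem coord_tailEquiv (x : Solenoid w) (n : ℕ) : coord _ n (tailEquiv w x) = coord w (n + 1) x :=
  rfl

theorem exists_pow_eq_of_forall_coprime (h : ∀ n, r.Coprime (w n)) (x : Solenoid w) {z : Circle}
    (hz : z ^ r = coord w 0 x) : ∃ y : Solenoid w, y ^ r = x ∧ coord w 0 y = z := by
  have hstep (n : ℕ) (u : {u : Circle // u ^ r = coord w n x}) :
      ∃ v : {v : Circle // v ^ r = coord w (n + 1) x}, (u : Circle) = v ^ w n := by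
    obtain ⟨v, hvw, hvr⟩ :=
      exists_pow_eq_and_pow_eq_of_coprime (h n) (u.2.trans (coord_eq_pow x n))
    exact ⟨⟨v, hvr⟩, hvw.symm⟩
  choose f hf using hstep
  let u (n : ℕ) : {u : Circle // u ^ r = coord w n x} := n.rec ⟨z, hz⟩ f
  let y : Solenoid w := ⟨fun n => (u n).1, fun n => hf n (u n)⟩
  exact ⟨y, ext_coord fun n => (map_pow (coord w n) y r).trans (u n).2, rfl⟩

theorem exists_pow_eq (hN : ∀ n ≥ N, r.Coprime (w n)) (x : Solenoid w) {z : Circle}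
    (hz : z ^ r = coord w N x) : ∃ y : Solenoid w, y ^ r = x ∧ coord w N y = z := by
  induction N generalizing w with
  | zero => exact exists_pow_eq_of_forall_coprime (fun n => hN n n.zero_le) x hz
  | succ N ih =>
    obtain ⟨y, hyx, hyz⟩ := ih (fun n hn => hN (n + 1) (Nat.succ_le_succ hn)) (tailEquiv w x) hz
    refine ⟨(tailEquiv w).symm y, by rw [← map_pow, hyx, MulEquiv.symm_apply_apply], ?_⟩
    rw [← coord_tailEquiv, MulEquiv.apply_symm_apply, hyz]

variable [NeZero r]

theorem powMonoidHom_surjective (hN : ∀ n ≥ N, r.Coprime (w n)) :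
    Surjective (powMonoidHom r : Solenoid w →* Solenoid w) := fun x => by
  obtain ⟨z, hz⟩ := (Circle.isQuotientCoveringMap_npow r).surjective (coord w N x)
  obtain ⟨y, hy, -⟩ := exists_pow_eq hN x hz
  exact ⟨y, hy⟩

theorem card_ker_powMonoidHom (hN : ∀ n ≥ N, r.Coprime (w n)) :
    Nat.card (powMonoidHom r : Solenoid w →* Solenoid w).ker = r := by
  let f (q : (powMonoidHom r : Solenoid w →* Solenoid w).ker) : rootsOfUnity r Circle :=
    rootsOfUnity.mkOfPowEq (coord w N q) (by
      have hq : (q : Solenoid w) ^ r = 1 := q.2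
      rw [← map_pow, hq, map_one])
  have hf : Bijective f := by
    constructor
    · intro q q' h
      have hcoord : coord w N q = coord w N q' :=
        congrArg (fun u : rootsOfUnity r Circle => ((u : Circleˣ) : Circle)) h
      refine Subtype.ext (div_eq_one.mp (eq_one_of_pow_eq_one hN (q / q').2 ?_))
      exact (map_div (coord w N) _ _).trans (div_eq_one.mpr hcoord)
    · intro u
      obtain ⟨y, hyr, hy⟩ := exists_pow_eq hN 1 ((mem_rootsOfUnity' r _).mp u.2)
      exact ⟨⟨y, hyr⟩, Subtype.ext (Units.ext hy)⟩
  rw [Nat.card_congr (Equiv.ofBijective f hf), Nat.card_congr (rootsOfUnityCircleEquiv r).toEquiv,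
    Complex.card_rootsOfUnity]

theorem isQuotientCoveringMap_powMonoidHom (hN : ∀ n ≥ N, r.Coprime (w n)) :
    IsQuotientCoveringMap (powMonoidHom r : Solenoid w →* Solenoid w)
      (powMonoidHom r : Solenoid w →* Solenoid w).ker := by
  have : Finite (powMonoidHom r : Solenoid w →* Solenoid w).ker :=
    Nat.finite_of_card_ne_zero (by rw [card_ker_powMonoidHom hN]; exact NeZero.ne r)
  have hq := IsQuotientMap.of_surjective_continuous (powMonoidHom_surjective hN)
    (continuous_pow r)
  exact hq.isQuotientCoveringMap_of_isDiscrete_ker_monoidHom ⟨inferInstance⟩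

end Power

end Solenoid

/-- **A solenoid of type (w₁, w₂, …) has a connected r-fold covering if and only
if r is relatively prime to all but finitely many of the wₙ.** -/
theorem solenoid_has_connected_cover_iff
    (w : ℕ → ℕ) (hw : ∀ n, 1 < w n) (r : ℕ) (hr : 0 < r) :
    (∃ (X : Type) (_ : TopologicalSpace X), ConnectedSpace X ∧
        ∃ π : X → Solenoid w, IsCoveringMap π ∧
          ∀ y : Solenoid w, Nat.card (π ⁻¹' {y}) = r) ↔
      ∃ N : ℕ, ∀ n ≥ N, Nat.Coprime r (w n) := by
  have (n : ℕ) : NeZero (w n) := ⟨Nat.ne_zero_of_lt (hw n)⟩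
  have : NeZero r := ⟨hr.ne'⟩
  constructor
  · rintro ⟨X, _, _, π, cov, hcard⟩
    obtain ⟨hne, hfin⟩ := Nat.card_pos_iff.mp (hr.trans_eq (hcard 1).symm)
    exact eventually_atTop.mp (hcard 1 ▸ Solenoid.eventually_coprime_card_fiber cov)
  · rintro ⟨N, hN⟩
    have hcov := Solenoid.isQuotientCoveringMap_powMonoidHom hN
    refine ⟨Solenoid w, inferInstance, inferInstance, _, hcov.isCoveringMap, fun y => ?_⟩
    obtain ⟨x, hx⟩ := Solenoid.powMonoidHom_surjective hN y
    rw [Nat.card_congr (hcov.fiberEquivGroup ⟨x, hx⟩), Solenoid.card_ker_powMonoidHom hN]
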